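/- arXiv:2004.14276 — 5 statements merged into one kernel-verified Lean document; each statement's English description precedes it below -/
import Mathlib

section
/- Let U be a reflexive real Banach space and let φ : U → (−∞,∞] be proper, lower semicontinuous and p-convex with constant c0 > 0 (p > 1). Then for all u, ũ ∈ U with ∂φ(u) ≠ ∅ and ∂φ(ũ) ≠ ∅, and all γ ∈ ∂φ(u), γ̃ ∈ ∂φ(ũ), one has D_γφ(ũ, u) ≤ (1/(p*(2c0)^{p*−1})) ‖γ − γ̃‖_{U*}^{p*}, where 1/p + 1/p* = 1. -/
/-!
Write `r = ‖u' - u‖` and `a = ‖γ - γ'‖`. The two Bregman distances add up to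
`(γ' - γ)(u' - u) ≤ a r`, and `p`-convexity gives `D_γ'φ(u, u') ≥ c0 r^p`
(`le_bregman_of_pconvex_real`), so `D_γφ(u', u) ≤ a r - c0 r^p`. Young's inequality
(`young_scaled`) bounds this by `a^{p⋆} / (p⋆ (p c0)^{p⋆-1})`, which suffices when `p ≥ 2`.

When `p < 2`, the effective domain of a `p`-convex function is a single point
(`eq_of_midpoint_of_lt_two`): the midpoint inequality with constant `K` implies the one with
constant `2^(2-p) K`, so the constant would be unbounded on a nontrivial segment. Hence `u = u'`
and the Bregman distance vanishes.
-/

noncomputable section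

/-- The subdifferential of a convex function `φ : U → (-∞,∞]` at `u`. -/
def Subdiff {U : Type*} [NormedAddCommGroup U] [NormedSpace ℝ U]
    (φ : U → EReal) (u : U) : Set (U →L[ℝ] ℝ) :=
  {γ | ∀ w : U, φ u + ((γ (w - u) : ℝ) : EReal) ≤ φ w}

/-- The Bregman distance `D_γφ(u', u) = φ(u') − φ(u) − γ(u' − u)`. -/
def Breg {U : Type*} [NormedAddCommGroup U] [NormedSpace ℝ U]
    (φ : U → EReal) (γ : U →L[ℝ] ℝ) (u' u : U) : EReal :=
  φ u' - φ u - ((γ (u' - u) : ℝ) : EReal)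

/-- `φ` is `p`-convex with constant `c0`. -/
def PConvex {U : Type*} [NormedAddCommGroup U] [NormedSpace ℝ U]
    (φ : U → EReal) (p c0 : ℝ) : Prop :=
  ∀ u' u : U, ∀ τ : ℝ, 0 ≤ τ → τ ≤ 1 →
    φ (τ • u' + (1 - τ) • u) + ((c0 * τ * (1 - τ) * ‖u - u'‖ ^ p : ℝ) : EReal) ≤
      (τ : EReal) * φ u' + ((1 - τ : ℝ) : EReal) * φ u

/-- A real normed space is reflexive if the canonical embedding into the double dual
is surjective. -/
def IsReflexiveSpace (U : Type*) [NormedAddCommGroup U] [NormedSpace ℝ U] : Prop :=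
  Function.Surjective (NormedSpace.inclusionInDoubleDual ℝ U)

/-- Scalar core of the bound `c0 ‖w - v‖^p ≤ D_γ φ(w, v)` for a subgradient `γ` at `v`, with
`a = φ v`, `b = φ w`, `g = γ (w - v)` and `c = c0 ‖w - v‖^p`. The hypothesis is the subgradient
inequality at `τ w + (1 - τ) v` combined with `p`-convexity; divide by `τ` and let `τ → 0`. -/
lemma le_bregman_of_pconvex_real {a b g c : ℝ}
    (h : ∀ τ : ℝ, 0 < τ → τ < 1 → a + τ * g + c * τ * (1 - τ) ≤ τ * b + (1 - τ) * a) :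
    c ≤ b - a - g := by
  have h1 : ∀ τ : ℝ, 0 < τ → τ < 1 → c * (1 - τ) ≤ b - a - g := by
    intro τ h0 h1
    have := h τ h0 h1
    refine le_of_mul_le_mul_left ?_ h0
    nlinarith
  have ht : Filter.Tendsto (fun τ : ℝ => c * (1 - τ)) (nhdsWithin 0 (Set.Ioi 0))
      (nhds (c * (1 - 0))) := by
    apply Filter.Tendsto.mono_left _ nhdsWithin_le_nhds
    apply Continuous.tendsto
    fun_prop
  have := le_of_tendsto ht (by
    filter_upwards [Ioo_mem_nhdsGT (show (0 : ℝ) < 1 by norm_num)] with τ hτ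
    exact h1 τ hτ.1 hτ.2)
  simpa using this

/-- Young's inequality, scaled so that the first term is exactly `c r^p`. -/
lemma young_scaled {p q c a r : ℝ} (hpq : p.HolderConjugate q) (hc : 0 < c)
    (ha : 0 ≤ a) (hr : 0 ≤ r) :
    a * r ≤ c * r ^ p + 1 / (q * (p * c) ^ (q - 1)) * a ^ q := by
  have hp := hpq.pos
  have hq := hpq.symm.pos
  have hpc : 0 < p * c := mul_pos hp hc
  -- the scaling factor
  set s := (p * c) ^ (1 / p) with hs
  have hs0 : 0 < s := Real.rpow_pos_of_pos hpc _
  have hsp : s ^ p = p * c := by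
    rw [hs, ← Real.rpow_mul hpc.le, one_div_mul_cancel hp.ne', Real.rpow_one]
  have hsq : s ^ q = (p * c) ^ (q - 1) := by
    rw [hs, ← Real.rpow_mul hpc.le]
    congr 1
    field_simp
    linarith [hpq.mul_eq_add]
  have hy := Real.young_inequality_of_nonneg (mul_nonneg hr hs0.le)
    (div_nonneg ha hs0.le) hpq
  rw [Real.mul_rpow hr hs0.le, Real.div_rpow ha hs0.le, hsp, hsq] at hy
  have e1 : r * s * (a / s) = a * r := by field_simp
  have e2 : r ^ p * (p * c) / p = c * r ^ p := by field_simp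
  have e3 : a ^ q / (p * c) ^ (q - 1) / q = 1 / (q * (p * c) ^ (q - 1)) * a ^ q := by
    have := (Real.rpow_pos_of_pos hpc (q - 1)).ne'
    field_simp
  rw [e1, e2, e3] at hy
  exact hy

/-- Midpoint `p`-convexity bootstraps itself: combining the inequality on the three
overlapping halves of a segment improves the constant by the factor `2^(2-p)`. -/
lemma midpoint_improve {U : Type*} [NormedAddCommGroup U] [NormedSpace ℝ U]
    {S : Set U} (hS : Convex ℝ S) {f : U → ℝ} {p K : ℝ}
    (h : ∀ x ∈ S, ∀ y ∈ S, f (midpoint ℝ x y) + K * ‖x - y‖ ^ p ≤ (f x + f y) / 2) :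
    ∀ x ∈ S, ∀ y ∈ S,
      f (midpoint ℝ x y) + (2 ^ (2 - p) * K) * ‖x - y‖ ^ p ≤ (f x + f y) / 2 := by
  intro x hx y hy
  have hm : ∀ a ∈ S, ∀ b ∈ S, midpoint ℝ a b ∈ S := fun a ha b hb => hS.midpoint_mem ha hb
  have hmS := hm x hx y hy
  have key : ∀ v : U, v = (2⁻¹ : ℝ) • (x - y) → ‖v‖ ^ p = 2⁻¹ ^ p * ‖x - y‖ ^ p := by
    rintro v rfl
    rw [norm_smul, Real.mul_rpow (norm_nonneg _) (norm_nonneg _)]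
    norm_num
  have h1 := h x hx _ hmS
  have h3 := h _ hmS y hy
  have h2 := h _ (hm x hx _ hmS) _ (hm _ hmS y hy)
  have em : midpoint ℝ (midpoint ℝ x (midpoint ℝ x y)) (midpoint ℝ (midpoint ℝ x y) y)
      = midpoint ℝ x y := by
    simp only [midpoint_eq_smul_add, invOf_eq_inv]
    module
  rw [em] at h2
  rw [key _ (by simp only [midpoint_eq_smul_add, invOf_eq_inv]; module)] at h1 h2 h3
  have e : (2 : ℝ) ^ (2 - p) = 4 * 2⁻¹ ^ p := by
    rw [Real.rpow_sub (by norm_num), Real.inv_rpow (by norm_num)]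
    norm_num [div_eq_mul_inv]
  rw [e]
  linarith

/-- For `p < 2` a real function can be midpoint-`p`-convex on a convex set only if the set has
at most one point, since by `midpoint_improve` the constant can be made arbitrarily large. -/
lemma eq_of_midpoint_of_lt_two {U : Type*} [NormedAddCommGroup U] [NormedSpace ℝ U]
    {S : Set U} (hS : Convex ℝ S) {f : U → ℝ} {p K : ℝ} (hp : p < 2) (hK : 0 < K)
    (h : ∀ x ∈ S, ∀ y ∈ S, f (midpoint ℝ x y) + K * ‖x - y‖ ^ p ≤ (f x + f y) / 2)
    {x y : U} (hx : x ∈ S) (hy : y ∈ S) : x = y := by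
  by_contra hxy
  have hn : ∀ n : ℕ, ∀ x ∈ S, ∀ y ∈ S,
      f (midpoint ℝ x y) + (((2 : ℝ) ^ (2 - p)) ^ n * K) * ‖x - y‖ ^ p ≤ (f x + f y) / 2 := by
    intro n
    induction n with
    | zero => simpa using h
    | succ n ih =>
      have := midpoint_improve hS ih
      simpa only [pow_succ', mul_assoc] using this
  have hr : 0 < K * ‖x - y‖ ^ p :=
    mul_pos hK (Real.rpow_pos_of_pos (norm_pos_iff.2 (sub_ne_zero.2 hxy)) _)
  have h1 : 1 < (2 : ℝ) ^ (2 - p) := Real.one_lt_rpow (by norm_num) (by linarith)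
  obtain ⟨n, hn'⟩ := pow_unbounded_of_one_lt
    (((f x + f y) / 2 - f (midpoint ℝ x y)) / (K * ‖x - y‖ ^ p)) h1
  rw [div_lt_iff₀ hr] at hn'
  have := hn n x hx y hy
  linarith

/-- The `p`-convexity inequality in real form between two points of the effective domain,
including that the domain is convex. -/
lemma PConvex.real {U : Type*} [NormedAddCommGroup U] [NormedSpace ℝ U]
    {φ : U → EReal} {p c0 : ℝ} (hφ : PConvex φ p c0) (hbot : ∀ u, φ u ≠ ⊥)
    {x y : U} (hx : φ x ≠ ⊤) (hy : φ y ≠ ⊤) {τ : ℝ} (h0 : 0 ≤ τ) (h1 : τ ≤ 1) :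
    φ (τ • x + (1 - τ) • y) ≠ ⊤ ∧
      (φ (τ • x + (1 - τ) • y)).toReal + c0 * τ * (1 - τ) * ‖y - x‖ ^ p ≤
        τ * (φ x).toReal + (1 - τ) * (φ y).toReal := by
  have h := hφ x y τ h0 h1
  rw [← EReal.coe_toReal hx (hbot x), ← EReal.coe_toReal hy (hbot y)] at h
  have hz : φ (τ • x + (1 - τ) • y) ≠ ⊤ := by
    intro hz
    rw [hz, EReal.top_add_coe, top_le_iff] at h
    exact EReal.coe_ne_top (τ * (φ x).toReal + (1 - τ) * (φ y).toReal) (by exact_mod_cast h)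
  refine ⟨hz, ?_⟩
  rw [← EReal.coe_toReal hz (hbot _)] at h
  exact_mod_cast h

/-- A subgradient exists only at points of the effective domain. -/
lemma Subdiff.ne_top {U : Type*} [NormedAddCommGroup U] [NormedSpace ℝ U]
    {φ : U → EReal} (hproper : ∃ u, φ u ≠ ⊤) {u : U} {γ : U →L[ℝ] ℝ}
    (h : γ ∈ Subdiff φ u) : φ u ≠ ⊤ := by
  obtain ⟨w, hw⟩ := hproper
  intro hu
  have := h w
  rw [hu, EReal.top_add_coe, top_le_iff] at this
  exact hw this

/-- If `U` is a reflexive real Banach space and `φ` is proper, lower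
semicontinuous and `p`-convex with constant `c0 > 0` (`p > 1`), then for all `u, u'` with
nonempty subdifferentials and all `γ ∈ ∂φ(u)`, `γ' ∈ ∂φ(u')`,
`D_γφ(u', u) ≤ (1/(p⋆ (2c0)^{p⋆−1})) ‖γ − γ'‖^{p⋆}` where `1/p + 1/p⋆ = 1`. -/
theorem bregman_upper_bound_of_pconvex
    {U : Type*} [NormedAddCommGroup U] [NormedSpace ℝ U] [CompleteSpace U]
    (hrefl : IsReflexiveSpace U)
    (φ : U → EReal) (p c0 pstar : ℝ) (hp : 1 < p) (hc0 : 0 < c0)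
    (hconj : 1 / p + 1 / pstar = 1)
    (hne_bot : ∀ u, φ u ≠ ⊥) (hproper : ∃ u, φ u ≠ ⊤)
    (hlsc : LowerSemicontinuous φ)
    (hpconv : PConvex φ p c0) :
    ∀ u u' : U, ∀ γ ∈ Subdiff φ u, ∀ γ' ∈ Subdiff φ u',
      Breg φ γ u' u ≤ ((1 / (pstar * (2 * c0) ^ (pstar - 1)) * ‖γ - γ'‖ ^ pstar : ℝ) : EReal) := by
  intro u u' γ hγ γ' hγ'
  have hu := Subdiff.ne_top hproper hγ
  have hu' := Subdiff.ne_top hproper hγ'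
  have hpq : p.HolderConjugate pstar :=
    Real.holderConjugate_iff.2 ⟨hp, by simpa only [one_div] using hconj⟩
  have hq := hpq.symm.pos
  have hreal : Breg φ γ u' u =
      (((φ u').toReal - (φ u).toReal - γ (u' - u) : ℝ) : EReal) := by
    rw [Breg]
    conv_lhs => rw [← EReal.coe_toReal hu (hne_bot u), ← EReal.coe_toReal hu' (hne_bot u')]
    norm_cast
  rw [hreal, EReal.coe_le_coe_iff]
  rcases lt_or_ge p 2 with hp2 | hp2
  · -- The effective domain is a single point.
    have huu : u = u' := by
      refine eq_of_midpoint_of_lt_two (S := {x | φ x ≠ ⊤}) (f := fun x => (φ x).toReal)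
        (p := p) (K := c0 / 4) ?_ hp2 (by positivity) ?_ hu hu'
      · intro x hx y hy a b ha hb hab
        obtain rfl : b = 1 - a := by linarith
        exact (hpconv.real hne_bot hx hy ha (by linarith)).1
      · intro x hx y hy
        have h := (hpconv.real hne_bot hx hy (τ := 1 / 2) (by norm_num) (by norm_num)).2
        have e : (1 / 2 : ℝ) • x + (1 - 1 / 2 : ℝ) • y = midpoint ℝ x y := by
          rw [midpoint_eq_smul_add, invOf_eq_inv]
          module
        rw [e, norm_sub_rev] at h
        linarith
    subst huu
    simp only [sub_self, map_zero]
    positivity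
  · have hD : c0 * ‖u' - u‖ ^ p ≤ (φ u).toReal - (φ u').toReal - γ' (u - u') := by
      apply le_bregman_of_pconvex_real
      intro τ h0 h1
      obtain ⟨hz, h⟩ := hpconv.real hne_bot hu hu' h0.le h1.le
      have hs := hγ' (τ • u + (1 - τ) • u')
      rw [← EReal.coe_toReal hz (hne_bot _), ← EReal.coe_toReal hu' (hne_bot u'),
        show τ • u + (1 - τ) • u' - u' = τ • (u - u') by module, map_smul, smul_eq_mul] at hs
      have hs' : (φ u').toReal + τ * γ' (u - u') ≤ (φ (τ • u + (1 - τ) • u')).toReal := by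
        exact_mod_cast hs
      linarith
    have hop : (γ' - γ) (u' - u) ≤ ‖γ - γ'‖ * ‖u' - u‖ := by
      rw [norm_sub_rev γ γ']
      exact (le_abs_self _).trans ((γ' - γ).le_opNorm _)
    have hy := young_scaled hpq hc0 (norm_nonneg (γ - γ')) (norm_nonneg (u' - u))
    have e : γ' (u - u') = - γ' (u' - u) := by rw [← map_neg, neg_sub]
    -- Young's inequality yields the constant with `p * c0`, which is at least `2 * c0` here.
    have hle : 1 / (pstar * (p * c0) ^ (pstar - 1)) * ‖γ - γ'‖ ^ pstar ≤
        1 / (pstar * (2 * c0) ^ (pstar - 1)) * ‖γ - γ'‖ ^ pstar := by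
      have := hpq.symm.sub_one_pos
      gcongr
    rw [sub_apply] at hop
    linarith
end
end

section
/- Let φ : U → (−∞,∞] be proper, lower semicontinuous and p-convex with constant c0 > 0 (p > 1) on a reflexive real Banach space U. Let γ_{k−1}, γ_k ∈ U*, λ_k ≥ 0, set Im_k = γ_k + λ_k(γ_k − γ_{k−1}), and let u_{k−1}, u_k, w_k be the minimizers of u ↦ φ(u) − ⟨γ_{k−1}, u⟩, u ↦ φ(u) − ⟨γ_k, u⟩ and w ↦ φ(w) − ⟨Im_k, w⟩ respectively. Then for every û ∈ D(φ): D_{Im_k}φ(û, w_k) − D_{γ_k}φ(û, u_k) ≤ λ_k Θ_k + (λ_k/(p*(2c0)^{p*−1}))‖γ_k − γ_{k−1}‖^{p*} + ((λ_k)^{p*}/(p*(2c0)^{p*−1}))‖γ_k − γ_{k−1}‖^{p*}, where Θ_k = D_{γ_k}φ(û, u_k) − D_{γ_{k−1}}φ(û, u_{k−1}) and 1/p + 1/p* = 1. -/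
/-!
Write `φ*(γ) = γ u - φ u` for the value of the convex conjugate at `γ`, where `u` minimizes `φ - γ`.
Then `D_γ φ(û, u) = φ û + φ*(γ) - γ û`, so `û` cancels from the claimed inequality, which becomes
`[φ*(Im) - φ*(γk) - (Im - γk) uk] + lam * [φ*(γprev) - φ*(γk) - (γprev - γk) uk] ≤ ...`.
Both brackets are Bregman distances of `φ*`, and `conjugate_estimate` bounds each of them by
`‖η - γ‖ ^ q / (q (2 c0) ^ (q - 1))`, with `q` the conjugate exponent.

That bound combines the growth inequality `φ w ≥ φ u + γ (w - u) + c0 ‖w - u‖ ^ p` at a minimizer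
`u` (`growth_of_minimizer`) with Young's inequality. Young's inequality yields the constant `2 c0`
only if `2 ≤ p` (`young_two_mul`). If `p < 2`, a `p`-convex function has at most one point in its
domain (`dom_subsingleton`), so the two minimizers coincide and the bound is trivial.

The auxiliary lemmas concern a real function `f` on a set `S`; they are applied to
`S = {u | φ u ≠ ⊤}` and `f u = (φ u).toReal`.
-/

noncomputable section

/-- `x` minimizes `u ↦ φ(u) − ⟨γ, u⟩`. -/
def MinimizesShifted {U : Type*} [NormedAddCommGroup U] [NormedSpace ℝ U]
    (φ : U → EReal) (γ : U →L[ℝ] ℝ) (x : U) : Prop :=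
  ∀ y : U, φ x - ((γ x : ℝ) : EReal) ≤ φ y - ((γ y : ℝ) : EReal)

/-- Real-valued form of `p`-convexity: `S` is convex and `f` is `p`-convex with constant `c0`
on `S`. -/
def PConvexOnReal {U : Type*} [NormedAddCommGroup U] [NormedSpace ℝ U]
    (S : Set U) (f : U → ℝ) (p c0 : ℝ) : Prop :=
  ∀ x ∈ S, ∀ y ∈ S, ∀ τ : ℝ, 0 ≤ τ → τ ≤ 1 →
    τ • x + (1 - τ) • y ∈ S ∧
      f (τ • x + (1 - τ) • y) + c0 * τ * (1 - τ) * ‖y - x‖ ^ p ≤ τ * f x + (1 - τ) * f y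

theorem PConvex.toReal {U : Type*} [NormedAddCommGroup U] [NormedSpace ℝ U]
    {φ : U → EReal} {p c0 : ℝ} (hne_bot : ∀ u, φ u ≠ ⊥) (h : PConvex φ p c0) :
    PConvexOnReal {u | φ u ≠ ⊤} (fun u => (φ u).toReal) p c0 := by
  intro x hx y hy τ h0 h1
  have hxy := h x y τ h0 h1
  have ex := EReal.coe_toReal hx (hne_bot x)
  have ey := EReal.coe_toReal hy (hne_bot y)
  rw [← ex, ← ey, ← EReal.coe_mul, ← EReal.coe_mul, ← EReal.coe_add] at hxy
  have hm : φ (τ • x + (1 - τ) • y) ≠ ⊤ := by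
    intro ht
    rw [ht, EReal.top_add_coe] at hxy
    exact absurd hxy (not_le.mpr (EReal.coe_lt_top _))
  refine ⟨hm, ?_⟩
  rw [← EReal.coe_toReal hm (hne_bot _), ← EReal.coe_add, EReal.coe_le_coe_iff] at hxy
  exact hxy

/-- Bootstrapping step: applying a midpoint convexity gap `k ‖x - y‖ ^ p` to the two halves of a
segment and to the segment between its quarter points improves `k` by the factor `2 ^ (2 - p)`. -/
theorem midpoint_gap_improve {U : Type*} [NormedAddCommGroup U] [NormedSpace ℝ U]
    {S : Set U} {f : U → ℝ} {p k : ℝ}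
    (hS : ∀ x ∈ S, ∀ y ∈ S, (1 / 2 : ℝ) • x + (1 / 2 : ℝ) • y ∈ S)
    (h : ∀ x ∈ S, ∀ y ∈ S,
      f ((1 / 2 : ℝ) • x + (1 / 2 : ℝ) • y) + k * ‖y - x‖ ^ p ≤ (f x + f y) / 2) :
    ∀ x ∈ S, ∀ y ∈ S,
      f ((1 / 2 : ℝ) • x + (1 / 2 : ℝ) • y) + (k * 2 ^ (2 - p)) * ‖y - x‖ ^ p
        ≤ (f x + f y) / 2 := by
  intro x hx y hy
  set m := (1 / 2 : ℝ) • x + (1 / 2 : ℝ) • y with hm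
  have hmS : m ∈ S := hS x hx y hy
  have h1 := h x hx m hmS
  have h2 := h m hmS y hy
  have h3 := h _ (hS x hx m hmS) _ (hS m hmS y hy)
  have e3 : (1 / 2 : ℝ) • ((1 / 2 : ℝ) • x + (1 / 2 : ℝ) • m)
      + (1 / 2 : ℝ) • ((1 / 2 : ℝ) • m + (1 / 2 : ℝ) • y) = m := by
    rw [hm]; module
  have n1 : m - x = (1 / 2 : ℝ) • (y - x) := by rw [hm]; module
  have n2 : y - m = (1 / 2 : ℝ) • (y - x) := by rw [hm]; module
  have n3 : ((1 / 2 : ℝ) • m + (1 / 2 : ℝ) • y) - ((1 / 2 : ℝ) • x + (1 / 2 : ℝ) • m)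
      = (1 / 2 : ℝ) • (y - x) := by module
  have hn : ‖(1 / 2 : ℝ) • (y - x)‖ ^ p = 2 ^ (-p) * ‖y - x‖ ^ p := by
    rw [norm_smul, Real.mul_rpow (norm_nonneg _) (norm_nonneg _), Real.norm_eq_abs,
      abs_of_pos (by norm_num), one_div, Real.inv_rpow (by norm_num), Real.rpow_neg (by norm_num)]
  have hpow : (2 : ℝ) ^ (2 - p) = 4 * 2 ^ (-p) := by
    rw [sub_eq_add_neg, Real.rpow_add (by norm_num)]; norm_num
  rw [n1, hn] at h1
  rw [n2, hn] at h2
  rw [e3, n3, hn] at h3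
  rw [hpow]
  nlinarith

/-- For `p < 2`, iterating `midpoint_gap_improve` makes the convexity gap of a nondegenerate
segment arbitrarily large, so the domain of a `p`-convex function has at most one point. -/
theorem dom_subsingleton {U : Type*} [NormedAddCommGroup U] [NormedSpace ℝ U]
    {S : Set U} {f : U → ℝ} {p c0 : ℝ} (hc0 : 0 < c0) (hp2 : p < 2)
    (h : PConvexOnReal S f p c0) : ∀ x ∈ S, ∀ y ∈ S, x = y := by
  have e : (1 - 1 / 2 : ℝ) = 1 / 2 := by norm_num
  have hS : ∀ x ∈ S, ∀ y ∈ S, (1 / 2 : ℝ) • x + (1 / 2 : ℝ) • y ∈ S := by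
    intro x hx y hy
    have := (h x hx y hy (1 / 2) (by norm_num) (by norm_num)).1
    rwa [e] at this
  have hn : ∀ n : ℕ, ∀ x ∈ S, ∀ y ∈ S,
      f ((1 / 2 : ℝ) • x + (1 / 2 : ℝ) • y)
        + (c0 / 4 * ((2 : ℝ) ^ (2 - p)) ^ n) * ‖y - x‖ ^ p ≤ (f x + f y) / 2 := by
    intro n
    induction n with
    | zero =>
      intro x hx y hy
      have := (h x hx y hy (1 / 2) (by norm_num) (by norm_num)).2
      rw [e] at this
      rw [pow_zero]
      linarith
    | succ n ih =>
      have := midpoint_gap_improve hS ih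
      intro x hx y hy
      rw [pow_succ, ← mul_assoc]
      exact this x hx y hy
  intro x hx y hy
  by_contra hxy
  have hpos : 0 < ‖y - x‖ ^ p :=
    Real.rpow_pos_of_pos (norm_pos_iff.mpr (sub_ne_zero.mpr (Ne.symm hxy))) _
  have hr : (1 : ℝ) < 2 ^ (2 - p) := Real.one_lt_rpow (by norm_num) (by linarith)
  obtain ⟨n, hlt⟩ := pow_unbounded_of_one_lt
    (((f x + f y) / 2 - f ((1 / 2 : ℝ) • x + (1 / 2 : ℝ) • y)) / (c0 / 4 * ‖y - x‖ ^ p)) hr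
  rw [div_lt_iff₀ (by positivity)] at hlt
  have := hn n x hx y hy
  nlinarith

theorem growth_of_minimizer {U : Type*} [NormedAddCommGroup U] [NormedSpace ℝ U]
    {S : Set U} {f : U → ℝ} {p c0 : ℝ} (h : PConvexOnReal S f p c0)
    {γ : U →L[ℝ] ℝ} {u : U} (hu : u ∈ S) (hmin : ∀ y ∈ S, f u - γ u ≤ f y - γ y)
    {w : U} (hw : w ∈ S) :
    f u + γ (w - u) + c0 * ‖w - u‖ ^ p ≤ f w := by
  have key : ∀ τ : ℝ, 0 < τ → τ ≤ 1 →
      (1 - τ) * (c0 * ‖w - u‖ ^ p) ≤ f w - f u - γ (w - u) := by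
    intro τ h0 h1
    obtain ⟨hz, hle⟩ := h w hw u hu τ h0.le h1
    have hm := hmin _ hz
    rw [norm_sub_rev u w] at hle
    simp only [map_add, map_smul, smul_eq_mul] at hm
    rw [map_sub]
    refine le_of_mul_le_mul_left ?_ h0
    nlinarith
  set A := c0 * ‖w - u‖ ^ p
  set X := f w - f u - γ (w - u) with hX
  have hAX : A ≤ X := by
    by_contra hlt
    push Not at hlt
    have h1 := key 1 one_pos le_rfl
    have hA : 0 < A := by linarith
    -- this choice of `τ` gives `(1 - τ) * A = (A + X) / 2`, which exceeds `X`
    have h2 := key ((A - X) / (2 * A)) (div_pos (by linarith) (by linarith))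
      ((div_le_one (by linarith)).mpr (by linarith))
    have h3 : (1 - (A - X) / (2 * A)) * A = (A + X) / 2 := by
      field_simp
      ring
    linarith
  linarith

/-- Young's inequality with weight `2 * c0`; `2 ≤ p` is what gives `2 * c0 / p ≤ c0`. -/
theorem young_two_mul {p q c0 a t : ℝ} (hpq : p.HolderConjugate q) (hp2 : 2 ≤ p)
    (hc0 : 0 < c0) (ha : 0 ≤ a) (ht : 0 ≤ t) :
    a * t - c0 * t ^ p ≤ 1 / (q * (2 * c0) ^ (q - 1)) * a ^ q := by
  have hc : 0 < 2 * c0 := by linarith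
  have hp0 : 0 < p := by linarith
  have hq0 : 0 < q := hpq.symm.pos
  set s := (2 * c0) ^ (1 / p) with hs
  have hs0 : 0 < s := Real.rpow_pos_of_pos hc _
  have hsp : s ^ p = 2 * c0 := by
    rw [hs, ← Real.rpow_mul hc.le, one_div_mul_cancel hp0.ne', Real.rpow_one]
  have hsq : s ^ q = (2 * c0) ^ (q - 1) := by
    rw [hs, ← Real.rpow_mul hc.le, one_div_mul_eq_div, hpq.symm.div_conj_eq_sub_one]
  have hy := Real.young_inequality_of_nonneg (mul_nonneg hs0.le ht) (div_nonneg ha hs0.le) hpq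
  rw [Real.mul_rpow hs0.le ht, Real.div_rpow ha hs0.le, hsp, hsq] at hy
  have e1 : s * t * (a / s) = a * t := by field_simp
  have e2 : a ^ q / (2 * c0) ^ (q - 1) / q = 1 / (q * (2 * c0) ^ (q - 1)) * a ^ q := by
    field_simp
  have e3 : 2 * c0 * t ^ p / p ≤ c0 * t ^ p := by
    rw [div_le_iff₀ hp0]
    nlinarith [mul_nonneg hc0.le (Real.rpow_nonneg ht p)]
  rw [e1, e2] at hy
  linarith

/-- The conjugate `φ*` is `q`-smooth: its Bregman distance between `η` and `γ` is at most
`‖η - γ‖ ^ q / (q (2 c0) ^ (q - 1))`. Here `φ*(η) = η w - f w`, `φ*(γ) = γ u - f u`, and `u` is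
the gradient of `φ*` at `γ`. -/
theorem conjugate_estimate {U : Type*} [NormedAddCommGroup U] [NormedSpace ℝ U]
    {S : Set U} {f : U → ℝ} {p q c0 : ℝ} (hpq : p.HolderConjugate q) (hc0 : 0 < c0)
    (h : PConvexOnReal S f p c0) {γ η : U →L[ℝ] ℝ} {u w : U} (hu : u ∈ S) (hw : w ∈ S)
    (hmin : ∀ y ∈ S, f u - γ u ≤ f y - γ y) :
    (η w - f w) - (γ u - f u) - (η - γ) u ≤ 1 / (q * (2 * c0) ^ (q - 1)) * ‖η - γ‖ ^ q := by
  have hq0 : 0 < q := hpq.symm.pos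
  rcases lt_or_ge p 2 with hp2 | hp2
  · obtain rfl := dom_subsingleton hc0 hp2 h u hu w hw
    have : 0 ≤ 1 / (q * (2 * c0) ^ (q - 1)) * ‖η - γ‖ ^ q := by positivity
    simp only [sub_apply]
    linarith
  · have hg := growth_of_minimizer h hu hmin hw
    have hy := young_two_mul hpq hp2 hc0 (norm_nonneg (η - γ)) (norm_nonneg (w - u))
    have hop : (η - γ) (w - u) ≤ ‖η - γ‖ * ‖w - u‖ :=
      (le_abs_self _).trans ((η - γ).le_opNorm (w - u))
    simp only [sub_apply, map_sub] at hg hop ⊢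
    linarith

theorem MinimizesShifted.toReal {U : Type*} [NormedAddCommGroup U] [NormedSpace ℝ U]
    {φ : U → EReal} (hne_bot : ∀ u, φ u ≠ ⊥) (hproper : ∃ u, φ u ≠ ⊤)
    {γ : U →L[ℝ] ℝ} {x : U} (h : MinimizesShifted φ γ x) :
    φ x ≠ ⊤ ∧ ∀ y ∈ {u | φ u ≠ ⊤}, (φ x).toReal - γ x ≤ (φ y).toReal - γ y := by
  have hx : φ x ≠ ⊤ := by
    intro ht
    obtain ⟨y, hy⟩ := hproper
    have := h y
    rw [ht, EReal.top_sub_coe, ← EReal.coe_toReal hy (hne_bot y), ← EReal.coe_sub] at this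
    exact absurd this (not_le.mpr (EReal.coe_lt_top _))
  refine ⟨hx, fun y hy => ?_⟩
  have := h y
  rwa [← EReal.coe_toReal hy (hne_bot y), ← EReal.coe_toReal hx (hne_bot x), ← EReal.coe_sub,
    ← EReal.coe_sub, EReal.coe_le_coe_iff] at this

theorem Breg_eq_coe {U : Type*} [NormedAddCommGroup U] [NormedSpace ℝ U]
    {φ : U → EReal} (hne_bot : ∀ u, φ u ≠ ⊥) (γ : U →L[ℝ] ℝ) {v u : U}
    (hv : φ v ≠ ⊤) (hu : φ u ≠ ⊤) :
    Breg φ γ v u = (((φ v).toReal - (φ u).toReal - γ (v - u) : ℝ) : EReal) := by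
  rw [Breg, EReal.coe_sub, EReal.coe_sub, EReal.coe_toReal hv (hne_bot v),
    EReal.coe_toReal hu (hne_bot u)]

/-- Estimate (3.5): with `Im_k = γ_k + λ_k (γ_k − γ_{k−1})` and
`u_{k−1}, u_k, w_k` the corresponding minimizers, for every `û ∈ D(φ)`:
`D_{Im_k}φ(û, w_k) − D_{γ_k}φ(û, u_k) ≤ λ_k Θ_k + (λ_k + λ_k^{p⋆})/(p⋆ (2c0)^{p⋆−1}) ‖γ_k − γ_{k−1}‖^{p⋆}`
(written with the two fraction terms separately), where
`Θ_k = D_{γ_k}φ(û, u_k) − D_{γ_{k−1}}φ(û, u_{k−1})`. -/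
theorem two_point_gradient_extrapolation_estimate
    {U : Type*} [NormedAddCommGroup U] [NormedSpace ℝ U] [CompleteSpace U]
    (hrefl : IsReflexiveSpace U)
    (φ : U → EReal) (p c0 pstar : ℝ) (hp : 1 < p) (hc0 : 0 < c0)
    (hconj : 1 / p + 1 / pstar = 1)
    (hne_bot : ∀ u, φ u ≠ ⊥) (hproper : ∃ u, φ u ≠ ⊤)
    (hlsc : LowerSemicontinuous φ) (hpconv : PConvex φ p c0)
    (γprev γk : U →L[ℝ] ℝ) (lam : ℝ) (hlam : 0 ≤ lam)
    (Im : U →L[ℝ] ℝ) (hIm : Im = γk + lam • (γk - γprev))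
    (uprev uk wk : U)
    (huprev : MinimizesShifted φ γprev uprev)
    (huk : MinimizesShifted φ γk uk)
    (hwk : MinimizesShifted φ Im wk) :
    ∀ uhat : U, φ uhat ≠ ⊤ →
      Breg φ Im uhat wk - Breg φ γk uhat uk ≤
        (lam : EReal) * (Breg φ γk uhat uk - Breg φ γprev uhat uprev) +
          ((lam / (pstar * (2 * c0) ^ (pstar - 1)) * ‖γk - γprev‖ ^ pstar +
            lam ^ pstar / (pstar * (2 * c0) ^ (pstar - 1)) * ‖γk - γprev‖ ^ pstar : ℝ) : EReal) := by
  intro uhat huhat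
  have hpq : p.HolderConjugate pstar := by
    rw [Real.holderConjugate_iff]
    exact ⟨hp, by simpa [one_div] using hconj⟩
  obtain ⟨hdprev, -⟩ := huprev.toReal hne_bot hproper
  obtain ⟨hdk, hmk⟩ := huk.toReal hne_bot hproper
  obtain ⟨hdw, -⟩ := hwk.toReal hne_bot hproper
  have hC := hpconv.toReal hne_bot
  have h1 := conjugate_estimate (η := Im) hpq hc0 hC hdk hdw hmk
  have h2 := conjugate_estimate (η := γprev) hpq hc0 hC hdk hdprev hmk
  have hn1 : ‖Im - γk‖ ^ pstar = lam ^ pstar * ‖γk - γprev‖ ^ pstar := by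
    rw [hIm, add_sub_cancel_left, norm_smul, Real.norm_eq_abs, abs_of_nonneg hlam,
      Real.mul_rpow hlam (norm_nonneg _)]
  rw [hn1] at h1
  rw [norm_sub_rev γprev γk] at h2
  have h3 := mul_le_mul_of_nonneg_left h2 hlam
  rw [Breg_eq_coe hne_bot Im huhat hdw, Breg_eq_coe hne_bot γk huhat hdk,
    Breg_eq_coe hne_bot γprev huhat hdprev, ← EReal.coe_sub, ← EReal.coe_sub, ← EReal.coe_mul,
    ← EReal.coe_add, EReal.coe_le_coe_iff]
  have hI : ∀ x, Im x = γk x + lam * (γk x - γprev x) := by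
    intro x
    simp [hIm]
  rw [div_eq_mul_one_div lam, div_eq_mul_one_div (lam ^ pstar)]
  simp only [sub_apply, map_sub, hI] at h1 h3 ⊢
  linarith
end
end

section
/- (Step-size lower bound.) Let p, s > 1 and let p* satisfy 1/p + 1/p* = 1, and let ϑ1 > ϑ̄2 > 0, ϑ3 > 0, C_0 > 0, ϑ2 ≥ 0, t ≥ 0. Let r be a nonzero vector in a real normed space, and let A be a continuous linear functional on another real normed space with ‖A‖ ≤ C_0‖r‖^{s−1} and A ≠ 0. If ϑ2 t^{p*} ≤ ϑ̄2^{p*−1}‖r‖^s, then υ := min{ (1/2)(ϑ1^{p*−1}‖r‖^s − ϑ2 t^{p*})^{1/(p*−1)} / ‖A‖^p , ϑ3‖r‖^{p−s} } satisfies υ ≥ min{ (ϑ1^{p*−1} − ϑ̄2^{p*−1})^{1/(p*−1)} / (2 C_0^p) , ϑ3 } · ‖r‖^{p−s}. -/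
/-!
Conjugacy gives `1 / (pstar - 1) = p - 1`. By the bound on `th2 * t ^ pstar`, the numerator of the
first term of the minimum is at least
`(th1 ^ (pstar - 1) - th2bar ^ (pstar - 1)) ^ (p - 1) * ‖r‖ ^ (s * (p - 1))`, up to the factor
`1 / 2`, and its denominator is at most `C0 ^ p * ‖r‖ ^ ((s - 1) * p)`. The powers of `‖r‖` combine
through `s * (p - 1) - (s - 1) * p = p - s`; the second term of the minimum is immediate.
-/

noncomputable section

/-- Lower bound for the step size of the two-point gradient method. -/
theorem step_size_lower_bound
    {W X : Type*} [NormedAddCommGroup W] [NormedSpace ℝ W]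
    [NormedAddCommGroup X] [NormedSpace ℝ X]
    (p s pstar : ℝ) (hp : 1 < p) (hs : 1 < s) (hconj : 1 / p + 1 / pstar = 1)
    (th1 th2bar th3 C0 th2 t : ℝ)
    (hth2bar : 0 < th2bar) (hth21 : th2bar < th1) (hth3 : 0 < th3) (hC0 : 0 < C0)
    (hth2 : 0 ≤ th2) (ht : 0 ≤ t)
    (r : W) (hr : r ≠ 0)
    (A : X →L[ℝ] ℝ) (hA : ‖A‖ ≤ C0 * ‖r‖ ^ (s - 1)) (hA0 : A ≠ 0)
    (hcond : th2 * t ^ pstar ≤ th2bar ^ (pstar - 1) * ‖r‖ ^ s) :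
    min ((1 / 2) * (th1 ^ (pstar - 1) * ‖r‖ ^ s - th2 * t ^ pstar) ^ (1 / (pstar - 1)) /
          ‖A‖ ^ p)
        (th3 * ‖r‖ ^ (p - s)) ≥
      min ((th1 ^ (pstar - 1) - th2bar ^ (pstar - 1)) ^ (1 / (pstar - 1)) / (2 * C0 ^ p))
        th3 * ‖r‖ ^ (p - s) := by
  have hp0 : 0 < p := by linarith
  have hq : pstar - 1 = (p - 1)⁻¹ := by
    -- `1 / 0 = 0` would force `p = 1`
    have hq0 : pstar ≠ 0 := by
      rintro rfl
      rw [div_zero, add_zero, div_eq_one_iff_eq hp0.ne'] at hconj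
      linarith
    have hp1 : p - 1 ≠ 0 := by linarith
    field_simp at hconj ⊢
    linarith
  have hqpos : 0 < pstar - 1 := by rw [hq]; exact inv_pos.2 (by linarith)
  have hinv : 1 / (pstar - 1) = p - 1 := by rw [hq, one_div, inv_inv]
  have hR : 0 < ‖r‖ := norm_pos_iff.2 hr
  have hN : 0 < ‖A‖ := norm_pos_iff.2 hA0
  rw [hinv]
  set D := th1 ^ (pstar - 1) - th2bar ^ (pstar - 1) with hD
  have hDpos : 0 < D := sub_pos.2 (Real.rpow_lt_rpow hth2bar.le hth21 hqpos)
  have hnum : D ^ (p - 1) * ‖r‖ ^ (s * (p - 1)) ≤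
      (th1 ^ (pstar - 1) * ‖r‖ ^ s - th2 * t ^ pstar) ^ (p - 1) := by
    rw [Real.rpow_mul hR.le, ← Real.mul_rpow hDpos.le (by positivity)]
    refine Real.rpow_le_rpow (by positivity) ?_ (by linarith)
    rw [hD, sub_mul]
    linarith
  have hden : ‖A‖ ^ p ≤ C0 ^ p * ‖r‖ ^ ((s - 1) * p) := by
    rw [Real.rpow_mul hR.le, ← Real.mul_rpow hC0.le (by positivity)]
    exact Real.rpow_le_rpow hN.le hA hp0.le
  have hexp : ‖r‖ ^ (p - s) = ‖r‖ ^ (s * (p - 1)) / ‖r‖ ^ ((s - 1) * p) := by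
    rw [← Real.rpow_sub hR]
    ring_nf
  have hkey : D ^ (p - 1) / (2 * C0 ^ p) * ‖r‖ ^ (p - s) ≤
      (1 / 2) * (th1 ^ (pstar - 1) * ‖r‖ ^ s - th2 * t ^ pstar) ^ (p - 1) / ‖A‖ ^ p := by
    calc D ^ (p - 1) / (2 * C0 ^ p) * ‖r‖ ^ (p - s)
        = (1 / 2) * (D ^ (p - 1) * ‖r‖ ^ (s * (p - 1))) / (C0 ^ p * ‖r‖ ^ ((s - 1) * p)) := by
          rw [hexp, div_mul_div_comm, mul_assoc 2, ← div_div, div_right_comm]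
          ring
      _ ≤ _ := by
          have hnn := (by positivity : 0 ≤ D ^ (p - 1) * ‖r‖ ^ (s * (p - 1))).trans hnum
          gcongr
  have hRps : 0 ≤ ‖r‖ ^ (p - s) := by positivity
  exact le_min ((mul_le_mul_of_nonneg_right (min_le_left _ _) hRps).trans hkey)
    (mul_le_mul_of_nonneg_right (min_le_right _ _) hRps)
end
end

section
/- Let p > 1 with conjugate exponent p*, c0 > 0, ϑ1 > ϑ̄2 > 0, ϑ3 > 0, C_0 > 0, ϑ5 > 0, ζ > 1, τ > 1, δ > 0, s > 1, ς ≥ 3, k ∈ ℕ. Let γ_k, γ_{k−1} ∈ U* with γ_k ≠ γ_{k−1}, let r ∈ V with ‖r‖ > τδ, and let υ ≥ min{ (ϑ1^{p*−1} − ϑ̄2^{p*−1})^{1/(p*−1)}/(2C_0^p), ϑ3 } · ‖r‖^{p−s}. Set ϑ6 = (p*(2c0)^{p*−1} ϑ5 τ^p / (2ζ)) · min{ (ϑ1^{p*−1} − ϑ̄2^{p*−1})^{1/(p*−1)}/(2C_0^p), ϑ3 } and λ = min{ ϑ6 δ^p / ‖γ_k − γ_{k−1}‖^{p*} , k/(k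 + ς) }. Then (λ + λ^{p*})/(p*(2c0)^{p*−1}) · ‖γ_k − γ_{k−1}‖^{p*} ≤ (ϑ5/ζ) υ ‖r‖^s. -/
/-!
Since `0 ≤ lam ≤ 1` and `pstar > 1`, one has `lam ^ pstar ≤ lam`, so the left-hand side is at most
`2 * lam * ‖γk - γprev‖ ^ pstar / (pstar * (2 * c0) ^ (pstar - 1))`. The first entry of the minimum
defining `lam` bounds this by `th5 / ζ * m * (τ * δ) ^ p`, where `m` is the minimum in the lower
bound for `υ`. Finally `m * (τ * δ) ^ p ≤ m * ‖r‖ ^ p = m * ‖r‖ ^ (p - s) * ‖r‖ ^ s ≤ υ * ‖r‖ ^ s`.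
-/

noncomputable section

/-- The explicit a priori choice (H) of the combination parameter
satisfies condition (3.16). -/
theorem explicit_combination_parameter_satisfies_cond
    {U V : Type*} [NormedAddCommGroup U] [NormedSpace ℝ U] [CompleteSpace U]
    [NormedAddCommGroup V] [NormedSpace ℝ V]
    (p pstar c0 th1 th2bar th3 C0 th5 ζ τ δ s ς : ℝ) (k : ℕ)
    (hp : 1 < p) (hconj : 1 / p + 1 / pstar = 1) (hc0 : 0 < c0)
    (hth2bar : 0 < th2bar) (hth21 : th2bar < th1) (hth3 : 0 < th3) (hC0 : 0 < C0)
    (hth5 : 0 < th5) (hζ : 1 < ζ) (hτ : 1 < τ) (hδ : 0 < δ) (hs : 1 < s) (hς : 3 ≤ ς)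
    (γk γprev : U →L[ℝ] ℝ) (hγ : γk ≠ γprev)
    (r : V) (hr : τ * δ < ‖r‖)
    (υ : ℝ)
    (hυ : min ((th1 ^ (pstar - 1) - th2bar ^ (pstar - 1)) ^ (1 / (pstar - 1)) /
            (2 * C0 ^ p)) th3 * ‖r‖ ^ (p - s) ≤ υ)
    (th6 : ℝ)
    (hth6 : th6 = pstar * (2 * c0) ^ (pstar - 1) * th5 * τ ^ p / (2 * ζ) *
      min ((th1 ^ (pstar - 1) - th2bar ^ (pstar - 1)) ^ (1 / (pstar - 1)) /
        (2 * C0 ^ p)) th3)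
    (lam : ℝ)
    (hlam : lam = min (th6 * δ ^ p / ‖γk - γprev‖ ^ pstar) ((k : ℝ) / ((k : ℝ) + ς))) :
    (lam + lam ^ pstar) / (pstar * (2 * c0) ^ (pstar - 1)) * ‖γk - γprev‖ ^ pstar ≤
      th5 / ζ * υ * ‖r‖ ^ s := by
  have hps : 1 < pstar := by
    have h1 : 1 / p < 1 := by rw [div_lt_one (by linarith)]; exact hp
    have h2 : 0 < 1 / p := by positivity
    have h3 : 0 < 1 / pstar := by linarith
    have h4 : 0 < pstar := one_div_pos.mp h3
    exact (div_lt_one h4).mp (by linarith)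
  have hm : 0 ≤ min ((th1 ^ (pstar - 1) - th2bar ^ (pstar - 1)) ^ (1 / (pstar - 1)) /
      (2 * C0 ^ p)) th3 := by
    have h1 : th2bar ^ (pstar - 1) ≤ th1 ^ (pstar - 1) :=
      Real.rpow_le_rpow hth2bar.le hth21.le (by linarith)
    have h2 := Real.rpow_nonneg (sub_nonneg.mpr h1) (1 / (pstar - 1))
    exact le_min (by positivity) hth3.le
  generalize min ((th1 ^ (pstar - 1) - th2bar ^ (pstar - 1)) ^ (1 / (pstar - 1)) /
      (2 * C0 ^ p)) th3 = m at *
  have hG : 0 < ‖γk - γprev‖ ^ pstar :=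
    Real.rpow_pos_of_pos (norm_pos_iff.mpr (sub_ne_zero.mpr hγ)) _
  generalize ‖γk - γprev‖ ^ pstar = G at *
  have hA : 0 < pstar * (2 * c0) ^ (pstar - 1) := by positivity
  generalize pstar * (2 * c0) ^ (pstar - 1) = A at *
  have hζ0 : 0 < ζ := by linarith
  have hτ0 : 0 < τ := by linarith
  have hr0 : 0 < ‖r‖ := lt_trans (by positivity) hr
  have hth6nn : 0 ≤ th6 := by rw [hth6]; positivity
  have hlam0 : 0 ≤ lam := by
    rw [hlam]
    have : 0 ≤ (k : ℝ) + ς := by positivity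
    exact le_min (by positivity) (by positivity)
  have hlam1 : lam ≤ 1 := by
    rw [hlam]
    refine (min_le_right _ _).trans (div_le_one_of_le₀ (by linarith) (by positivity))
  have hpow : lam ^ pstar ≤ lam := by
    simpa using Real.rpow_le_rpow_of_exponent_ge_of_imp hlam0 hlam1 hps.le
      (fun _ h => absurd h (by linarith))
  have hlamG : lam * G ≤ th6 * δ ^ p := by
    rw [← le_div_iff₀ hG, hlam]
    exact min_le_left _ _
  have hres : m * (τ ^ p * δ ^ p) ≤ υ * ‖r‖ ^ s := calc
    m * (τ ^ p * δ ^ p) = m * (τ * δ) ^ p := by rw [Real.mul_rpow hτ0.le hδ.le]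
    _ ≤ m * ‖r‖ ^ p := by gcongr
    _ = m * ‖r‖ ^ (p - s) * ‖r‖ ^ s := by
      rw [mul_assoc, ← Real.rpow_add hr0, sub_add_cancel]
    _ ≤ υ * ‖r‖ ^ s := by gcongr
  calc (lam + lam ^ pstar) / A * G ≤ (lam + lam) / A * G := by gcongr
    _ = 2 / A * (lam * G) := by ring
    _ ≤ 2 / A * (th6 * δ ^ p) := by gcongr
    _ = th5 / ζ * (m * (τ ^ p * δ ^ p)) := by
      rw [hth6]
      field_simp
    _ ≤ th5 / ζ * (υ * ‖r‖ ^ s) := by gcongr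
    _ = th5 / ζ * υ * ‖r‖ ^ s := by ring
end
end

section
/- Let U, V be real normed spaces, S ⊆ U, F : S → V, 0 ≤ η < 1, c ≥ 0, and suppose for each u ∈ S there is a bounded linear operator L(u) : U → V such that the tangential cone condition ‖F(ũ) − F(u) − L(u)(ũ − u)‖ ≤ η‖F(ũ) − F(u)‖ holds for all u, ũ ∈ S. Let û ∈ S satisfy F(û) = v, and let u', w, w' ∈ S satisfy ‖F(u') − F(w')‖ ≤ c‖F(w') − v‖ and ‖F(w') − v‖ ≤ ‖F(w) − v‖. Then ‖L(w)(u' − û)‖ ≤ (1 + η)(c + 3) ‖F(w) − v‖. -/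
/-!
The cone condition and the triangle inequality give `‖L(w)(x − w)‖ ≤ (1 + η) ‖F(x) − F(w)‖` for every
`x ∈ S`. Splitting the argument of `L(w)` at `w` reduces the estimate to this bound at the two
endpoints: the solution contributes `‖F(w) − v‖`, and the other endpoint at most
`(c + 2) ‖F(w) − v‖`, by passing through the intermediate point and then `v`.
-/

noncomputable section

/-- Estimate (3.29): under the tangential cone condition, if
`F(û) = v`, `‖F(u') − F(w')‖ ≤ c ‖F(w') − v‖` and `‖F(w') − v‖ ≤ ‖F(w) − v‖`, then
`‖L(w)(u' − û)‖ ≤ (1 + η)(c + 3) ‖F(w) − v‖`. -/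
theorem linearization_estimate_along_subsequence
    {U V : Type*} [NormedAddCommGroup U] [NormedSpace ℝ U]
    [NormedAddCommGroup V] [NormedSpace ℝ V]
    (S : Set U) (F : U → V) (η c : ℝ) (hη0 : 0 ≤ η) (hη1 : η < 1) (hc : 0 ≤ c)
    (L : U → (U →L[ℝ] V))
    (htan : ∀ u ∈ S, ∀ u' ∈ S, ‖F u' - F u - L u (u' - u)‖ ≤ η * ‖F u' - F u‖)
    (v : V) (uhat : U) (huhat : uhat ∈ S) (hsol : F uhat = v)
    (u' w w' : U) (hu' : u' ∈ S) (hw : w ∈ S) (hw' : w' ∈ S)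
    (h1 : ‖F u' - F w'‖ ≤ c * ‖F w' - v‖)
    (h2 : ‖F w' - v‖ ≤ ‖F w - v‖) :
    ‖L w (u' - uhat)‖ ≤ (1 + η) * (c + 3) * ‖F w - v‖ := by
  have key : ∀ x ∈ S, ‖L w (x - w)‖ ≤ (1 + η) * ‖F x - F w‖ := by
    intro x hx
    have ht := htan w hw x hx
    have htri := norm_sub_le (F x - F w) (F x - F w - L w (x - w))
    rw [sub_sub_cancel] at htri
    linarith
  have hsplit : L w (u' - uhat) = L w (u' - w) - L w (uhat - w) := by
    rw [← map_sub, sub_sub_sub_cancel_right]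
  have hFu : ‖F u' - F w‖ ≤ (c + 2) * ‖F w - v‖ := by
    have e : F u' - F w = (F u' - F w') + (F w' - v) - (F w - v) := by abel
    have t1 := norm_sub_le ((F u' - F w') + (F w' - v)) (F w - v)
    have t2 := norm_add_le (F u' - F w') (F w' - v)
    have t3 := mul_le_mul_of_nonneg_left h2 hc
    rw [e]
    linarith
  have hhat : ‖L w (uhat - w)‖ ≤ (1 + η) * ‖F w - v‖ := by
    have h := key uhat huhat
    rwa [hsol, norm_sub_rev v] at h
  calc ‖L w (u' - uhat)‖ ≤ ‖L w (u' - w)‖ + ‖L w (uhat - w)‖ := by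
        rw [hsplit]; exact norm_sub_le _ _
    _ ≤ (1 + η) * ((c + 2) * ‖F w - v‖) + (1 + η) * ‖F w - v‖ :=
        add_le_add ((key u' hu').trans
          (mul_le_mul_of_nonneg_left hFu (by linarith))) hhat
    _ = (1 + η) * (c + 3) * ‖F w - v‖ := by ring
end
end
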